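/- For any nonnegative n×n matrix A, the arithmetic mean of all entries times n satisfies: min over B ∈ Ω(A) of ρ(B) ≤ (1/n)·∑ᵢ∑ⱼ a_{i,j} ≤ max over B ∈ Ω(A) of ρ(B). -/

import Mathlib

open Matrix Finset

/-- The Perron root: the largest nonnegative real eigenvalue of a matrix. -/
noncomputable def perronRoot {n : ℕ} (A : Matrix (Fin n) (Fin n) ℝ) : ℝ :=
  sSup {r : ℝ | 0 ≤ r ∧ ∃ v : Fin n → ℝ, v ≠ 0 ∧ A.mulVec v = r • v}

/-- Ω(A): matrices obtained by permuting the entries within each row of A independently. -/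
def Omega {n : ℕ} (A : Matrix (Fin n) (Fin n) ℝ) : Set (Matrix (Fin n) (Fin n) ℝ) :=
  {B | ∀ i, ∃ φ : Equiv.Perm (Fin n), ∀ j, B i j = A i (φ j)}

/-- Irreducibility: the directed graph of the matrix is strongly connected. -/
def Irred {n : ℕ} (A : Matrix (Fin n) (Fin n) ℝ) : Prop :=
  ∀ i j, ∃ m : ℕ, 0 < m ∧ 0 < (A ^ m) i j

/-- A monotone, positively homogeneous, continuous self-map of `ι → ℝ`, perturbed by `ε > 0`, has a
positive eigenvector. -/
theorem exists_pos_eigenvector_add_const {ι : Type*} [Fintype ι] [Nonempty ι]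
    {T : (ι → ℝ) → ι → ℝ} (hcont : Continuous T) (hmono : Monotone T)
    (hhom : ∀ c : ℝ, 0 ≤ c → ∀ x, T (c • x) = c • T x) {ε : ℝ} (hε : 0 < ε) :
    ∃ x ∈ stdSimplex ℝ ι, ∃ r : ℝ, 0 ≤ r ∧ (∀ i, 0 < x i) ∧ ∀ i, T x i + ε = r * x i := by
  classical
  have hT0 : T 0 = 0 := by simpa using hhom 0 le_rfl 0
  have hTnn : ∀ x, 0 ≤ x → ∀ i, 0 ≤ T x i := fun x hx i => by
    have := hmono hx i
    rwa [hT0] at this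
  obtain ⟨M, hM⟩ := (isCompact_stdSimplex ℝ ι).bddAbove_image
    (f := fun x => ∑ i, (T x i + ε)) (by fun_prop)
  have hbound : ∀ x ∈ stdSimplex ℝ ι, ∀ r : ℝ, (∀ i, r * x i ≤ T x i + ε) → r ≤ M := by
    intro x hx r hr
    calc r = ∑ i, r * x i := by rw [← mul_sum, hx.2, mul_one]
      _ ≤ ∑ i, (T x i + ε) := sum_le_sum fun i _ => hr i
      _ ≤ M := hM ⟨x, hx, rfl⟩
  let K : Set ((ι → ℝ) × ℝ) :=
    (stdSimplex ℝ ι ×ˢ Set.Icc 0 M) ∩ {p | ∀ i, p.2 * p.1 i ≤ T p.1 i + ε}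
  have hKc : IsCompact K := by
    refine ((isCompact_stdSimplex ℝ ι).prod isCompact_Icc).inter_right ?_
    simp only [Set.ofPred_forall]
    exact isClosed_iInter fun i => isClosed_le (by fun_prop) (by fun_prop)
  have hmem : ∀ x ∈ stdSimplex ℝ ι, ∀ r : ℝ, 0 ≤ r → (∀ i, r * x i ≤ T x i + ε) → (x, r) ∈ K :=
    fun x hx r hr h => ⟨⟨hx, hr, hbound x hx r h⟩, h⟩
  have hKn : K.Nonempty := by
    let i₀ := Classical.arbitrary ι
    have hx := single_mem_stdSimplex ℝ i₀
    refine ⟨_, hmem _ hx 0 le_rfl fun i => ?_⟩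
    have := hTnn _ hx.1 i
    linarith
  obtain ⟨⟨x, r⟩, hxr, hmax⟩ := hKc.exists_isMaxOn hKn (f := Prod.snd) (by fun_prop)
  obtain ⟨⟨hx, hr0, -⟩, hle⟩ := hxr
  simp only at hx hr0 hle
  have heq : ∀ i, T x i + ε = r * x i := by
    by_contra! hne
    obtain ⟨i₀, hi₀⟩ := hne
    set y : ι → ℝ := fun i => T x i + ε with hy
    have hypos : ∀ i, 0 < y i := fun i => by
      have := hTnn x hx.1 i
      simp only [hy]; linarith
    have hspos : 0 < ∑ i, y i := sum_pos (fun i _ => hypos i) univ_nonempty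
    set s := ∑ i, y i
    have hrs : r < s := by
      calc r = ∑ i, r * x i := by rw [← mul_sum, hx.2, mul_one]
        _ < s := sum_lt_sum (fun i _ => hle i)
          ⟨i₀, mem_univ _, (hle i₀).lt_of_ne hi₀.symm⟩
    have hstrict : ∀ i, r * y i < T y i + ε * s := by
      intro i
      have h1 : r * T x i ≤ T y i := by
        have := hmono (show r • x ≤ y from hle) i
        rwa [hhom r hr0] at this
      have h2 : ε * r < ε * s := mul_lt_mul_of_pos_left hrs hε
      simp only [hy] at h1 ⊢
      linarith
    let q : ℝ := univ.inf' univ_nonempty fun i => (T y i + ε * s) / y i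
    have hrq : r < q := by
      rw [lt_inf'_iff]
      exact fun i _ => (lt_div_iff₀ (hypos i)).2 (hstrict i)
    have hq : ∀ i, q * y i ≤ T y i + ε * s := fun i =>
      (le_div_iff₀ (hypos i)).1 (inf'_le _ (mem_univ i))
    have hysimp : s⁻¹ • y ∈ stdSimplex ℝ ι := by
      refine ⟨fun i => mul_nonneg (inv_nonneg.2 hspos.le) (hypos i).le, ?_⟩
      simp only [Pi.smul_apply, smul_eq_mul, ← mul_sum]
      exact inv_mul_cancel₀ hspos.ne'
    have hmem' := hmem _ hysimp q (hr0.trans hrq.le) fun i => by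
      rw [hhom _ (inv_nonneg.2 hspos.le)]
      simp only [Pi.smul_apply, smul_eq_mul]
      calc q * (s⁻¹ * y i) = s⁻¹ * (q * y i) := by ring
        _ ≤ s⁻¹ * (T y i + ε * s) := mul_le_mul_of_nonneg_left (hq i) (inv_nonneg.2 hspos.le)
        _ = s⁻¹ * T y i + ε := by field_simp
    exact absurd (hmax hmem') (not_le.2 hrq)
  refine ⟨x, hx, r, hr0, fun i => ?_, heq⟩
  refine (hx.1 i).lt_of_ne fun h => ?_
  have h1 := heq i
  have h2 := hTnn x hx.1 i
  rw [← h, mul_zero] at h1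
  linarith

/-- A monotone, positively homogeneous, continuous self-map of `ι → ℝ` has a nonnegative
eigenvector. -/
theorem exists_nonneg_eigenvector {ι : Type*} [Fintype ι] [Nonempty ι]
    {T : (ι → ℝ) → ι → ℝ} (hcont : Continuous T) (hmono : Monotone T)
    (hhom : ∀ c : ℝ, 0 ≤ c → ∀ x, T (c • x) = c • T x) :
    ∃ x ∈ stdSimplex ℝ ι, ∃ r : ℝ, 0 ≤ r ∧ T x = r • x := by
  obtain ⟨M, hM⟩ := (isCompact_stdSimplex ℝ ι).bddAbove_image
    (f := fun x => ∑ i, (T x i + 1)) (by fun_prop)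
  have happrox : ∀ ε : ℝ, 0 < ε → ε ≤ 1 →
      ∃ p ∈ stdSimplex ℝ ι ×ˢ Set.Icc 0 M, ‖T p.1 - p.2 • p.1‖ ≤ ε := by
    intro ε hε hε1
    obtain ⟨x, hx, r, hr, -, h⟩ := exists_pos_eigenvector_add_const hcont hmono hhom hε
    refine ⟨(x, r), ⟨hx, hr, ?_⟩, ?_⟩
    · calc r = ∑ i, r * x i := by rw [← mul_sum, hx.2, mul_one]
        _ ≤ ∑ i, (T x i + 1) := sum_le_sum fun i _ => by linarith [h i]
        _ ≤ M := hM ⟨x, hx, rfl⟩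
    · refine (pi_norm_le_iff_of_nonneg hε.le).2 fun i => ?_
      have : (T x - r • x) i = -ε := by
        simp only [Pi.sub_apply, Pi.smul_apply, smul_eq_mul]
        linarith [h i]
      rw [this, norm_neg, Real.norm_of_nonneg hε.le]
  obtain ⟨p₀, hp₀, -⟩ := happrox 1 one_pos le_rfl
  obtain ⟨⟨x, r⟩, hxr, hmin⟩ :=
    ((isCompact_stdSimplex ℝ ι).prod (isCompact_Icc (a := (0 : ℝ)) (b := M))).exists_isMinOn
      ⟨p₀, hp₀⟩ (f := fun p => ‖T p.1 - p.2 • p.1‖) (by fun_prop)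
  refine ⟨x, hxr.1, r, hxr.2.1, ?_⟩
  rw [← sub_eq_zero, ← norm_le_zero_iff]
  refine le_of_forall_pos_le_add fun ε hε => ?_
  obtain ⟨p, hp, h⟩ := happrox (min ε 1) (lt_min hε one_pos) (min_le_right _ _)
  have h1 : ‖T x - r • x‖ ≤ ‖T p.1 - p.2 • p.1‖ := hmin hp
  linarith [min_le_left ε 1]

/-- A positive subinvariant vector of a nonnegative matrix bounds all its nonnegative
eigenvalues. -/
theorem eigenvalue_le_of_mulVec_le {ι : Type*} [Fintype ι] {B : Matrix ι ι ℝ}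
    (hB : ∀ i j, 0 ≤ B i j) {x : ι → ℝ} (hx : ∀ i, 0 < x i) {c : ℝ}
    (h : ∀ i, (B *ᵥ x) i ≤ c * x i) {r : ℝ} (hr : 0 ≤ r) {v : ι → ℝ} (hv : v ≠ 0)
    (hev : B *ᵥ v = r • v) : r ≤ c := by
  obtain ⟨k, hk⟩ := Function.ne_iff.1 hv
  obtain ⟨i, -, hi⟩ := exists_max_image univ (fun i => |v i| / x i)
    ⟨k, mem_univ k⟩
  set d := |v i| / x i with hd
  have hdpos : 0 < d := (div_pos (abs_pos.2 hk) (hx k)).trans_le (hi k (mem_univ k))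
  have hvi : |v i| = d * x i := by rw [hd, div_mul_cancel₀ _ (hx i).ne']
  have hvj : ∀ j, |v j| ≤ d * x j := fun j => (div_le_iff₀ (hx j)).1 (hi j (mem_univ j))
  have key : r * (d * x i) ≤ c * (d * x i) := by
    calc r * (d * x i) = |(B *ᵥ v) i| := by
          rw [hev, Pi.smul_apply, smul_eq_mul, abs_mul, abs_of_nonneg hr, hvi]
      _ ≤ ∑ j, |B i j * v j| := abs_sum_le_sum_abs _ _
      _ ≤ ∑ j, B i j * (d * x j) := sum_le_sum fun j _ => by
          rw [abs_mul, abs_of_nonneg (hB i j)]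
          exact mul_le_mul_of_nonneg_left (hvj j) (hB i j)
      _ = d * (B *ᵥ x) i := by
          simp only [mulVec, dotProduct, mul_sum]
          exact sum_congr rfl fun j _ => by ring
      _ ≤ d * (c * x i) := mul_le_mul_of_nonneg_left (h i) hdpos.le
      _ = c * (d * x i) := by ring
  exact le_of_mul_le_mul_right key (mul_pos hdpos (hx i))

theorem perronRoot_le_of_mulVec_le {n : ℕ} {B : Matrix (Fin n) (Fin n) ℝ}
    (hB : ∀ i j, 0 ≤ B i j) {x : Fin n → ℝ} (hx : ∀ i, 0 < x i) {c : ℝ} (hc : 0 ≤ c)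
    (h : ∀ i, (B *ᵥ x) i ≤ c * x i) : perronRoot B ≤ c :=
  Real.sSup_le (fun _ ⟨hr, _, hv, hev⟩ => eigenvalue_le_of_mulVec_le hB hx h hr hv hev) hc

theorem perronRoot_nonneg {n : ℕ} (B : Matrix (Fin n) (Fin n) ℝ) : 0 ≤ perronRoot B :=
  Real.sSup_nonneg fun _ h => h.1

theorem mulVec_one_le_sum {ι : Type*} [Fintype ι] {B : Matrix ι ι ℝ} (hB : ∀ i j, 0 ≤ B i j)
    (i : ι) : (B *ᵥ fun _ => 1) i ≤ (∑ i, ∑ j, B i j) * 1 := by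
  simp only [mulVec, dotProduct, mul_one]
  exact single_le_sum (f := fun i => ∑ j, B i j)
    (fun i _ => sum_nonneg fun j _ => hB i j) (mem_univ i)

theorem perronRoot_le_sum {n : ℕ} {B : Matrix (Fin n) (Fin n) ℝ} (hB : ∀ i j, 0 ≤ B i j) :
    perronRoot B ≤ ∑ i, ∑ j, B i j :=
  perronRoot_le_of_mulVec_le hB (fun _ => one_pos)
    (sum_nonneg fun i _ => sum_nonneg fun j _ => hB i j) (mulVec_one_le_sum hB)

theorem le_perronRoot {n : ℕ} {B : Matrix (Fin n) (Fin n) ℝ} (hB : ∀ i j, 0 ≤ B i j) {r : ℝ}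
    (hr : 0 ≤ r) {v : Fin n → ℝ} (hv : v ≠ 0) (hev : B *ᵥ v = r • v) : r ≤ perronRoot B :=
  le_csSup ⟨_, fun _ ⟨hs, _, hw, hew⟩ => eigenvalue_le_of_mulVec_le hB (fun _ => one_pos)
    (mulVec_one_le_sum hB) hs hw hew⟩ ⟨hr, v, hv, hev⟩

theorem nonneg_of_mem_Omega {n : ℕ} {A B : Matrix (Fin n) (Fin n) ℝ} (hA : ∀ i j, 0 ≤ A i j)
    (hB : B ∈ Omega A) (i j : Fin n) : 0 ≤ B i j := by
  obtain ⟨φ, hφ⟩ := hB i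
  exact hφ j ▸ hA i (φ j)

theorem sum_eq_of_mem_Omega {n : ℕ} {A B : Matrix (Fin n) (Fin n) ℝ} (hB : B ∈ Omega A) :
    ∑ i, ∑ j, B i j = ∑ i, ∑ j, A i j := by
  refine sum_congr rfl fun i _ => ?_
  obtain ⟨φ, hφ⟩ := hB i
  simp only [hφ]
  exact Equiv.sum_comp φ (A i)

theorem bddAbove_perronRoot_Omega {n : ℕ} {A : Matrix (Fin n) (Fin n) ℝ}
    (hA : ∀ i j, 0 ≤ A i j) : BddAbove (perronRoot '' Omega A) := by
  refine ⟨∑ i, ∑ j, A i j, ?_⟩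
  rintro _ ⟨B, hB, rfl⟩
  exact sum_eq_of_mem_Omega hB ▸ perronRoot_le_sum (nonneg_of_mem_Omega hA hB)

theorem bddBelow_perronRoot_Omega {n : ℕ} (A : Matrix (Fin n) (Fin n) ℝ) :
    BddBelow (perronRoot '' Omega A) :=
  ⟨0, by rintro _ ⟨B, -, rfl⟩; exact perronRoot_nonneg B⟩

/-- The product of the row `a`, cyclically shifted by `k`, with `x`. -/
def shiftDot {n : ℕ} (a : Fin n → ℝ) (k : Fin n) (x : Fin n → ℝ) : ℝ :=
  ∑ j, a (j + k) * x j

section ShiftDot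

variable {n : ℕ}

theorem continuous_shiftDot (a : Fin n → ℝ) (k : Fin n) : Continuous (shiftDot a k) := by
  unfold shiftDot
  fun_prop

theorem monotone_shiftDot {a : Fin n → ℝ} (ha : ∀ j, 0 ≤ a j) (k : Fin n) :
    Monotone (shiftDot a k) := fun _ _ h =>
  sum_le_sum fun j _ => mul_le_mul_of_nonneg_left (h j) (ha _)

theorem shiftDot_smul (a : Fin n → ℝ) (k : Fin n) (c : ℝ) (x : Fin n → ℝ) :
    shiftDot a k (c • x) = c * shiftDot a k x := by
  simp only [shiftDot, Pi.smul_apply, smul_eq_mul, mul_sum]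
  exact sum_congr rfl fun j _ => by ring

theorem sum_shiftDot [NeZero n] (a x : Fin n → ℝ) :
    ∑ k, shiftDot a k x = (∑ j, a j) * ∑ j, x j := by
  simp only [shiftDot]
  rw [sum_comm, mul_sum]
  refine sum_congr rfl fun j _ => ?_
  rw [← sum_mul]
  congr 1
  exact Equiv.sum_comp (Equiv.addLeft j) a

theorem shift_mem_Omega [NeZero n] (A : Matrix (Fin n) (Fin n) ℝ) (k : Fin n → Fin n) :
    (Matrix.of fun i j => A i (j + k i)) ∈ Omega A :=
  fun i => ⟨Equiv.addRight (k i), fun _ => rfl⟩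

end ShiftDot

theorem exists_mem_Omega_le_perronRoot {n : ℕ} [NeZero n] {A : Matrix (Fin n) (Fin n) ℝ}
    (hA : ∀ i j, 0 ≤ A i j) :
    ∃ B ∈ Omega A, (∑ i, ∑ j, A i j) / n ≤ perronRoot B := by
  let T : (Fin n → ℝ) → Fin n → ℝ := fun x i =>
    univ.sup' univ_nonempty fun k => shiftDot (A i) k x
  have hTcont : Continuous T := continuous_pi fun i =>
    Continuous.finset_sup'_apply _ fun k _ => continuous_shiftDot _ _
  have hTmono : Monotone T := fun x y h i =>
    sup'_mono_fun fun k _ => monotone_shiftDot (hA i) k h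
  have hThom : ∀ c : ℝ, 0 ≤ c → ∀ x, T (c • x) = c • T x := fun c hc x => funext fun i => by
    simp only [T, shiftDot_smul, Pi.smul_apply, smul_eq_mul]
    exact (mul₀_sup' hc _ _ _).symm
  obtain ⟨x, hx, r, hr, hTx⟩ := exists_nonneg_eigenvector hTcont hTmono hThom
  choose k _ hk using fun i => exists_mem_eq_sup' univ_nonempty
    fun k => shiftDot (A i) k x
  have hB := shift_mem_Omega A k
  refine ⟨_, hB, le_trans ?_ (le_perronRoot (nonneg_of_mem_Omega hA hB) hr (v := x) ?_ ?_)⟩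
  · have hn : (0 : ℝ) < n := Nat.cast_pos.2 (NeZero.pos n)
    have hrow : ∀ i, ∑ j, A i j ≤ n * T x i := fun i => by
      calc ∑ j, A i j = ∑ k, shiftDot (A i) k x := by rw [sum_shiftDot, hx.2, mul_one]
        _ ≤ ∑ _k : Fin n, T x i := sum_le_sum fun k hk =>
            le_sup' (fun k => shiftDot (A i) k x) hk
        _ = n * T x i := by simp
    rw [div_le_iff₀ hn]
    calc ∑ i, ∑ j, A i j ≤ ∑ i, n * T x i := sum_le_sum fun i _ => hrow i
      _ = r * n := by
        simp only [hTx, Pi.smul_apply, smul_eq_mul, ← mul_sum, hx.2]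
        ring
  · rintro rfl
    simpa using hx.2
  · rw [← hTx]
    exact funext fun i => (hk i).symm

theorem exists_mem_Omega_perronRoot_le {n : ℕ} [NeZero n] {A : Matrix (Fin n) (Fin n) ℝ}
    (hA : ∀ i j, 0 ≤ A i j) {ε : ℝ} (hε : 0 < ε) :
    ∃ B ∈ Omega A, perronRoot B ≤ (∑ i, ∑ j, A i j) / n + ε := by
  have hn : (0 : ℝ) < n := Nat.cast_pos.2 (NeZero.pos n)
  let T : (Fin n → ℝ) → Fin n → ℝ := fun x i =>
    univ.inf' univ_nonempty fun k => shiftDot (A i) k x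
  have hTcont : Continuous T := continuous_pi fun i =>
    Continuous.finset_inf'_apply _ fun k _ => continuous_shiftDot _ _
  have hTmono : Monotone T := fun x y h i =>
    inf'_mono_fun fun k _ => monotone_shiftDot (hA i) k h
  have hThom : ∀ c : ℝ, 0 ≤ c → ∀ x, T (c • x) = c • T x := fun c hc x => funext fun i => by
    simp only [T, shiftDot_smul, Pi.smul_apply, smul_eq_mul]
    exact (apply_inf'_eq_inf'_comp univ_nonempty (c * ·)
      fun a b => mul_min_of_nonneg a b hc).symm
  obtain ⟨x, hx, r, hr, hxpos, hTx⟩ :=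
    exists_pos_eigenvector_add_const hTcont hTmono hThom (div_pos hε hn)
  choose k _ hk using fun i => exists_mem_eq_inf' univ_nonempty
    fun k => shiftDot (A i) k x
  have hB := shift_mem_Omega A k
  refine ⟨_, hB, (perronRoot_le_of_mulVec_le (nonneg_of_mem_Omega hA hB) hxpos hr
    fun i => ?_).trans ?_⟩
  · have hBx : (Matrix.of (fun i j => A i (j + k i)) *ᵥ x) i = T x i := (hk i).symm
    rw [hBx, ← hTx i]
    exact le_add_of_nonneg_right (div_pos hε hn).le
  · have hrow : ∀ i, n * T x i ≤ ∑ j, A i j := fun i => by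
      calc n * T x i = ∑ _k : Fin n, T x i := by simp
        _ ≤ ∑ k, shiftDot (A i) k x := sum_le_sum fun k hk =>
            inf'_le (fun k => shiftDot (A i) k x) hk
        _ = ∑ j, A i j := by rw [sum_shiftDot, hx.2, mul_one]
    calc r = ∑ i, r * x i := by rw [← mul_sum, hx.2, mul_one]
      _ = ∑ i, (T x i + ε / n) := sum_congr rfl fun i _ => (hTx i).symm
      _ = (∑ i, T x i) + ε := by
        rw [sum_add_distrib]
        simp [mul_div_cancel₀ ε hn.ne']
      _ ≤ (∑ i, ∑ j, A i j) / n + ε := by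
        gcongr
        rw [le_div_iff₀ hn, mul_comm, mul_sum]
        exact sum_le_sum fun i _ => hrow i

theorem stmt11 {n : ℕ} (hn : 0 < n) (A : Matrix (Fin n) (Fin n) ℝ)
    (hA : ∀ i j, 0 ≤ A i j) :
    sInf (perronRoot '' Omega A) ≤ (∑ i, ∑ j, A i j) / n ∧
      (∑ i, ∑ j, A i j) / n ≤ sSup (perronRoot '' Omega A) := by
  have : NeZero n := ⟨hn.ne'⟩
  constructor
  · refine le_of_forall_pos_le_add fun ε hε => ?_
    obtain ⟨B, hB, h⟩ := exists_mem_Omega_perronRoot_le hA hε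
    exact (csInf_le (bddBelow_perronRoot_Omega A) ⟨B, hB, rfl⟩).trans h
  · obtain ⟨B, hB, h⟩ := exists_mem_Omega_le_perronRoot hA
    exact h.trans (le_csSup (bddAbove_perronRoot_Omega hA) ⟨B, hB, rfl⟩)
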